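/- arXiv:1510.08740 — 4 statements merged into one kernel-verified Lean document; each statement's English description precedes it below -/
import Mathlib

section
/- Let H be a real Hilbert space, Ψ : H → ℝ ∪ {+∞} proper, lower-semicontinuous and convex, and Φ : H → ℝ convex and continuously differentiable with L-Lipschitz continuous gradient. Suppose x* ∈ argmin(Ψ + Φ), and let (x_k) be generated by the accelerated forward-backward algorithm with parameter α ≥ 3 and step size 0 < s < 1/L. With θ_k = Θ(x_k) − Θ(x*) and d_k = (1/(2s))‖x_{k+1} − x_k‖², one has, for every k ≥ 1, θ_{k+1} + d_k ≤ θ_k + ((k−1)²/(k+α−1)²) d_{k−1}. -/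
open Filter RealInnerProductSpace

/-!
For an arbitrary point `y`, let `p` be the proximal point of `y - s • ∇Φ y`. Strong convexity of
the proximal objective, the tangent inequality for `Φ` at `y` and the quadratic upper bound for `Φ`
at `y` combine, when `s L ≤ 1`, into
`Θ p + (1 / 2s) ‖u - p‖² ≤ Θ u + (1 / 2s) ‖u - y‖²` for all `u`.
Take `u = x_k` and `y = y_k`: then `p = x_{k+1}`, and `‖x_k - y_k‖` is the inertial coefficient
times `‖x_k - x_{k-1}‖`. The minimal value of `Θ` enters only as an additive constant.
-/

open scoped NNReal

section FirstOrderBounds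

variable {E F : Type*} [NormedAddCommGroup E] [NormedSpace ℝ E]
  [NormedAddCommGroup F] [NormedSpace ℝ F] {S : Set E}

lemma hasDerivWithinAt_comp_lineMap {f : E → F} {f' : E →L[ℝ] F} {x y : E} {t : ℝ}
    (hS : Convex ℝ S) (hx : x ∈ S) (hy : y ∈ S)
    (hf : HasFDerivWithinAt f f' S (AffineMap.lineMap x y t)) :
    HasDerivWithinAt (fun τ : ℝ ↦ f (AffineMap.lineMap x y τ)) (f' (y - x)) (Set.Icc 0 1) t :=
  hf.comp_hasDerivWithinAt t AffineMap.hasDerivWithinAt_lineMap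
    fun _ hτ ↦ hS.lineMap_mem hx hy hτ

lemma add_apply_sub_le_of_convexOn {f : E → ℝ} {f' : E →L[ℝ] ℝ} {x y : E}
    (hf : ConvexOn ℝ S f) (hf' : HasFDerivWithinAt f f' S x) (hx : x ∈ S) (hy : y ∈ S) :
    f x + f' (y - x) ≤ f y := by
  have hline : ConvexOn ℝ (Set.Icc 0 1) fun t : ℝ ↦ f (AffineMap.lineMap x y t) :=
    (hf.comp_affineMap (AffineMap.lineMap x y)).subset
      (fun _ ht ↦ hf.1.lineMap_mem hx hy ht) (convex_Icc 0 1)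
  have hderiv : HasDerivWithinAt (fun t : ℝ ↦ f (AffineMap.lineMap x y t)) (f' (y - x))
      (Set.Icc 0 1) 0 :=
    hasDerivWithinAt_comp_lineMap hf.1 hx hy (by rwa [AffineMap.lineMap_apply_zero])
  have hslope := hline.le_slope_of_hasDerivWithinAt (by simp) (by simp) one_pos hderiv
  simp only [slope_def_field, AffineMap.lineMap_apply_one, AffineMap.lineMap_apply_zero, sub_zero,
    div_one] at hslope
  linarith

lemma norm_sub_sub_apply_le_of_lipschitzOnWith {f : E → F} {f' : E → E →L[ℝ] F} {L : ℝ≥0}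
    {x y : E} (hS : Convex ℝ S) (hf : ∀ u ∈ S, HasFDerivWithinAt f (f' u) S u)
    (hL : LipschitzOnWith L f' S) (hx : x ∈ S) (hy : y ∈ S) :
    ‖f y - f x - f' x (y - x)‖ ≤ L / 2 * ‖y - x‖ ^ 2 := by
  let γ : ℝ → E := AffineMap.lineMap x y
  have hγ : ∀ t ∈ Set.Icc (0 : ℝ) 1, γ t ∈ S := fun t ht ↦ hS.lineMap_mem hx hy ht
  have hremainder : ∀ t ∈ Set.Icc (0 : ℝ) 1,
      HasDerivWithinAt (fun τ ↦ f (γ τ) - f x - τ • f' x (y - x))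
        ((f' (γ t) - f' x) (y - x)) (Set.Icc 0 1) t := fun t ht ↦ by
    simpa only [one_smul, sub_apply] using!
      ((hasDerivWithinAt_comp_lineMap hS hx hy (hf _ (hγ t ht))).sub_const (f x)).fun_sub
        ((hasDerivWithinAt_id t _).smul_const (f' x (y - x)))
  have hbound : ∀ t : ℝ, HasDerivAt (fun τ ↦ L / 2 * ‖y - x‖ ^ 2 * τ ^ 2)
      (L * t * ‖y - x‖ ^ 2) t := fun t ↦
    ((hasDerivAt_pow 2 t).const_mul _).congr_deriv (by push_cast; ring)
  have hderiv_le : ∀ t ∈ Set.Ico (0 : ℝ) 1,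
      ‖(f' (γ t) - f' x) (y - x)‖ ≤ L * t * ‖y - x‖ ^ 2 := fun t ht ↦ calc
    ‖(f' (γ t) - f' x) (y - x)‖ ≤ ‖f' (γ t) - f' x‖ * ‖y - x‖ := ContinuousLinearMap.le_opNorm _ _
    _ ≤ L * ‖γ t - x‖ * ‖y - x‖ := by
      gcongr
      exact hL.norm_sub_le (hγ t (Set.Ico_subset_Icc_self ht)) hx
    _ = L * t * ‖y - x‖ ^ 2 := by
      rw [← dist_eq_norm (γ t), dist_lineMap_left, Real.norm_of_nonneg ht.1, dist_eq_norm']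
      ring
  have h := image_norm_le_of_norm_deriv_right_le_deriv_boundary
    (fun t ht ↦ (hremainder t ht).continuousWithinAt)
    (fun t ht ↦ (hremainder t (Set.Ico_subset_Icc_self ht)).mono_of_mem_nhdsWithin
      (Icc_mem_nhdsGE_of_mem ht))
    (by simp [γ]) hbound hderiv_le (Set.right_mem_Icc.2 zero_le_one)
  simpa [γ] using h

end FirstOrderBounds

section Gradient

variable {H : Type*} [NormedAddCommGroup H] [InnerProductSpace ℝ H] [CompleteSpace H] {S : Set H}

lemma le_add_inner_add_sq_of_lipschitzOnWith_gradient {Φ : H → ℝ} {Φ' : H → H} {L : ℝ≥0} {x y : H}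
    (hS : Convex ℝ S) (hΦ : ∀ u ∈ S, HasGradientWithinAt Φ (Φ' u) S u)
    (hL : LipschitzOnWith L Φ' S) (hx : x ∈ S) (hy : y ∈ S) :
    Φ y ≤ Φ x + ⟪Φ' x, y - x⟫ + L / 2 * ‖y - x‖ ^ 2 := by
  have hdual : LipschitzOnWith L (fun u ↦ InnerProductSpace.toDual ℝ H (Φ' u)) S := by
    simpa only [one_mul] using! (InnerProductSpace.toDual ℝ H).lipschitz.comp_lipschitzOnWith hL
  have h := (Real.le_norm_self _).trans
    (norm_sub_sub_apply_le_of_lipschitzOnWith hS (fun u hu ↦ (hΦ u hu).hasFDerivWithinAt)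
      hdual hx hy)
  rw [InnerProductSpace.toDual_apply_apply] at h
  linarith

end Gradient

/-- Convexity of an extended-real-valued function on a real vector space. `ConvexOn` does not apply
because `EReal` is not an `ℝ`-module. In this encoding `⊤ + ⊥ = ⊥` and `0 * ⊤ = 0`. -/
def ExtendedConvex {E : Type*} [AddCommMonoid E] [SMul ℝ E] (Ψ : E → EReal) : Prop :=
  ∀ u v : E, ∀ a b : ℝ, 0 ≤ a → 0 ≤ b → a + b = 1 →
    Ψ (a • u + b • v) ≤ (a : EReal) * Ψ u + (b : EReal) * Ψ v

/-- `IsProx Ψ s v p` says that `p` is a proximal point of `v` for `Ψ` with step size `s`, i.e. a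
minimizer of `u ↦ Ψ u + (1 / (2 * s)) * ‖u - v‖ ^ 2`. It is a relation, so that neither existence
nor uniqueness of a minimizer has to be established. -/
def IsProx {E : Type*} [NormedAddCommGroup E] (Ψ : E → EReal) (s : ℝ) (v p : E) : Prop :=
  ∀ u : E, Ψ p + ((1 / (2 * s) * ‖p - v‖ ^ 2 : ℝ) : EReal)
    ≤ Ψ u + ((1 / (2 * s) * ‖u - v‖ ^ 2 : ℝ) : EReal)

lemma add_coe_le_add_coe_of_sub_le_sub {p q : EReal} {a b a' b' : ℝ}
    (h : p + (a : EReal) ≤ q + (b : EReal)) (hab : a' - a ≤ b' - b) :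
    p + (a' : EReal) ≤ q + (b' : EReal) := calc
  p + (a' : EReal) = p + (a : EReal) + ((a' - a : ℝ) : EReal) := by
    rw [add_assoc, ← EReal.coe_add, add_sub_cancel]
  _ ≤ q + (b : EReal) + ((b' - b : ℝ) : EReal) := add_le_add h (EReal.coe_le_coe_iff.2 hab)
  _ = q + (b' : EReal) := by rw [add_assoc, ← EReal.coe_add, add_sub_cancel]

section Prox

variable {H : Type*} [NormedAddCommGroup H] [InnerProductSpace ℝ H] {Ψ : H → EReal} {s : ℝ}

lemma norm_smul_add_smul_sub_sq (u p v : H) (t : ℝ) :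
    ‖t • u + (1 - t) • p - v‖ ^ 2
      = t * ‖u - v‖ ^ 2 + (1 - t) * ‖p - v‖ ^ 2 - t * (1 - t) * ‖u - p‖ ^ 2 := by
  have hline : t • u + (1 - t) • p - v = (p - v) + t • (u - p) := by module
  have hend : u - v = (p - v) + (u - p) := by abel
  rw [hline, hend, norm_add_sq_real, norm_add_sq_real, norm_smul, inner_smul_right, mul_pow,
    Real.norm_eq_abs, sq_abs]
  ring

lemma IsProx.three_point {v p : H} (hp : IsProx Ψ s v p) (hΨ : ExtendedConvex Ψ) (u : H) :
    Ψ p + ((1 / (2 * s) * ‖p - v‖ ^ 2 + 1 / (2 * s) * ‖u - p‖ ^ 2 : ℝ) : EReal)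
      ≤ Ψ u + ((1 / (2 * s) * ‖u - v‖ ^ 2 : ℝ) : EReal) := by
  have hmin := hp u
  have hsegment := fun (t : ℝ) (ht : t ∈ Set.Ioo 0 1) ↦ (hp (t • u + (1 - t) • p)).trans
    (add_le_add_left (hΨ u p t (1 - t) ht.1.le (sub_nonneg.2 ht.2.le) (add_sub_cancel t 1)) _)
  generalize Ψ u = q, Ψ p = r at hmin hsegment ⊢
  induction q with
  | top => simp only [EReal.top_add_coe, le_top]
  | bot =>
    have hr : r = ⊥ := by simpa [-one_div, -EReal.coe_mul] using hmin
    simp only [hr, EReal.bot_add, bot_le]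
  | coe q =>
  induction r with
  | bot => simp only [EReal.bot_add, bot_le]
  | top =>
    rw [EReal.top_add_coe, ← EReal.coe_add, top_le_iff] at hmin
    exact absurd hmin (EReal.coe_ne_top _)
  | coe r =>
  norm_cast at hsegment ⊢
  set c := 1 / (2 * s)
  have hquotient : ∀ t ∈ Set.Ioo (0 : ℝ) 1,
      r + (c * ‖p - v‖ ^ 2 + c * ((1 - t) * ‖u - p‖ ^ 2)) ≤ q + c * ‖u - v‖ ^ 2 := fun t ht ↦ by
    have h := hsegment t ht
    rw [norm_smul_add_smul_sub_sq] at h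
    refine le_of_mul_le_mul_left ?_ ht.1
    linarith
  have hlim : Tendsto (fun t : ℝ ↦ r + (c * ‖p - v‖ ^ 2 + c * ((1 - t) * ‖u - p‖ ^ 2)))
      (nhdsWithin 0 (Set.Ioi 0)) (nhds (r + (c * ‖p - v‖ ^ 2 + c * ‖u - p‖ ^ 2))) :=
    (Continuous.tendsto' (by fun_prop) _ _ (by simp)).mono_left nhdsWithin_le_nhds
  exact le_of_tendsto hlim (eventually_of_mem (Ioo_mem_nhdsGT one_pos) hquotient)

lemma one_div_two_mul_norm_sub_sub_smul_sq (hs : s ≠ 0) (u y g : H) :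
    1 / (2 * s) * ‖u - (y - s • g)‖ ^ 2
      = 1 / (2 * s) * ‖u - y‖ ^ 2 + ⟪g, u - y⟫ + s / 2 * ‖g‖ ^ 2 := by
  have h : u - (y - s • g) = (u - y) + s • g := by abel
  rw [h, norm_add_sq_real, inner_smul_right, real_inner_comm, norm_smul, mul_pow,
    Real.norm_eq_abs, sq_abs]
  field_simp

variable [CompleteSpace H] {Φ : H → ℝ} {Φ' : H → H} {L : ℝ≥0}

lemma forwardBackward_le (hΨ : ExtendedConvex Ψ) (hΦ : ConvexOn ℝ Set.univ Φ)
    (hΦ' : ∀ u, HasGradientAt Φ (Φ' u) u) (hL : LipschitzWith L Φ') (hs : 0 < s) (hsL : s * L ≤ 1)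
    {y p : H} (hp : IsProx Ψ s (y - s • Φ' y) p) (u : H) :
    Ψ p + (Φ p : EReal) + ((1 / (2 * s) * ‖u - p‖ ^ 2 : ℝ) : EReal)
      ≤ Ψ u + (Φ u : EReal) + ((1 / (2 * s) * ‖u - y‖ ^ 2 : ℝ) : EReal) := by
  have hthree := hp.three_point hΨ u
  simp only [one_div_two_mul_norm_sub_sub_smul_sq hs.ne'] at hthree
  have htangent : Φ y + ⟪Φ' y, u - y⟫ ≤ Φ u := by
    simpa using add_apply_sub_le_of_convexOn hΦ (hΦ' y).hasFDerivAt.hasFDerivWithinAt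
      (Set.mem_univ y) (Set.mem_univ u)
  have hdescent : Φ p ≤ Φ y + ⟪Φ' y, p - y⟫ + L / 2 * ‖p - y‖ ^ 2 :=
    le_add_inner_add_sq_of_lipschitzOnWith_gradient convex_univ
      (fun v _ ↦ (hΦ' v).hasFDerivAt.hasFDerivWithinAt) hL.lipschitzOnWith
      (Set.mem_univ y) (Set.mem_univ p)
  have hcurvature : L / 2 * ‖p - y‖ ^ 2 ≤ 1 / (2 * s) * ‖p - y‖ ^ 2 := by
    have hL2 : (L : ℝ) / 2 ≤ 1 / (2 * s) := by
      rw [div_le_div_iff₀ two_pos (by positivity)]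
      linarith
    gcongr
  rw [add_assoc, add_assoc, ← EReal.coe_add, ← EReal.coe_add]
  exact add_coe_le_add_coe_of_sub_le_sub hthree (by linarith)

end Prox

theorem fista_mechanical_energy_decrease_general
    {H : Type*} [NormedAddCommGroup H] [InnerProductSpace ℝ H] [CompleteSpace H]
    {Ψ : H → EReal} {Φ : H → ℝ} {Φ' : H → H} {L : ℝ≥0} {s : ℝ} {β : ℕ → ℝ}
    (hΨ : ExtendedConvex Ψ) (hΦ : ConvexOn ℝ Set.univ Φ)
    (hΦ' : ∀ u, HasGradientAt Φ (Φ' u) u) (hL : LipschitzWith L Φ') (hs : 0 < s) (hsL : s * L ≤ 1)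
    {x y : ℕ → H} (hy : ∀ k, 1 ≤ k → y k = x k + β k • (x k - x (k - 1)))
    (hx : ∀ k, 1 ≤ k → IsProx Ψ s (y k - s • Φ' (y k)) (x (k + 1))) (k : ℕ) (hk : 1 ≤ k) :
    Ψ (x (k + 1)) + (Φ (x (k + 1)) : EReal) + ((1 / (2 * s) * ‖x (k + 1) - x k‖ ^ 2 : ℝ) : EReal)
      ≤ Ψ (x k) + (Φ (x k) : EReal)
        + ((β k ^ 2 * (1 / (2 * s) * ‖x k - x (k - 1)‖ ^ 2) : ℝ) : EReal) := by
  have hinertia : ‖x k - y k‖ ^ 2 = β k ^ 2 * ‖x k - x (k - 1)‖ ^ 2 := by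
    rw [hy k hk, sub_add_cancel_left, norm_neg, norm_smul, mul_pow, Real.norm_eq_abs, sq_abs]
  have hstep := forwardBackward_le hΨ hΦ hΦ' hL hs hsL (hx k hk) (x k)
  rwa [norm_sub_rev, hinertia, mul_left_comm] at hstep

/-- Inequality (12): `θ_{k+1} + d_k ≤ θ_k + ((k-1)²/(k+α-1)²) d_{k-1}`. -/
theorem fista_mechanical_energy_decrease
    {H : Type*} [NormedAddCommGroup H] [InnerProductSpace ℝ H] [CompleteSpace H]
    (Ψ : H → EReal) (Φ : H → ℝ) (Φ' : H → H) (L s α : ℝ)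
    (hΨ_ne_bot : ∀ u, Ψ u ≠ ⊥) (hΨ_proper : ∃ u, Ψ u ≠ ⊤)
    (hΨ_lsc : LowerSemicontinuous Ψ)
    (hΨ_convex : ∀ u v : H, ∀ a b : ℝ, 0 ≤ a → 0 ≤ b → a + b = 1 →
      Ψ (a • u + b • v) ≤ (a : EReal) * Ψ u + (b : EReal) * Ψ v)
    (hΦ_convex : ConvexOn ℝ Set.univ Φ)
    (hΦ_diff : ∀ u, HasGradientAt Φ (Φ' u) u)
    (hΦ_lip : LipschitzWith (Real.toNNReal L) Φ')
    (hα : 3 ≤ α) (hs : 0 < s) (hsL : s < 1 / L)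
    (x y : ℕ → H)
    (hy : ∀ k : ℕ, 1 ≤ k →
      y k = x k + (((k : ℝ) - 1) / ((k : ℝ) + α - 1)) • (x k - x (k - 1)))
    (hx : ∀ k : ℕ, 1 ≤ k → ∀ u : H,
      Ψ (x (k + 1)) + ((1 / (2 * s) * ‖x (k + 1) - (y k - s • Φ' (y k))‖ ^ 2 : ℝ) : EReal)
        ≤ Ψ u + ((1 / (2 * s) * ‖u - (y k - s • Φ' (y k))‖ ^ 2 : ℝ) : EReal))
    (xstar : H)
    (hxstar : ∀ u, Ψ xstar + (Φ xstar : EReal) ≤ Ψ u + (Φ u : EReal)) :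
    ∀ k : ℕ, 1 ≤ k →
      ((Ψ (x (k + 1)) + (Φ (x (k + 1)) : EReal)) - (Ψ xstar + (Φ xstar : EReal))) + (((1 / (2 * s) * ‖x (k + 1) - x k‖ ^ 2) : ℝ) : EReal)
        ≤ ((Ψ (x k) + (Φ (x k) : EReal)) - (Ψ xstar + (Φ xstar : EReal))) + ((((k : ℝ) - 1) ^ 2 / ((k : ℝ) + α - 1) ^ 2 * (1 / (2 * s) * ‖x ((k - 1) + 1) - x (k - 1)‖ ^ 2) : ℝ) : EReal) := by
  intro k hk
  have hL : 0 < L := one_div_pos.1 (hs.trans hsL)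
  have hsL' : s * L.toNNReal ≤ 1 := by
    rw [Real.coe_toNNReal L hL.le]
    exact ((lt_div_iff₀ hL).1 hsL).le
  have hdecrease := fista_mechanical_energy_decrease_general hΨ_convex hΦ_convex hΦ_diff hΦ_lip hs
    hsL' hy hx k hk
  rw [div_pow] at hdecrease
  simpa only [Nat.sub_add_cancel hk, sub_eq_add_neg, add_right_comm] using
    add_le_add_left hdecrease (-(Ψ xstar + (Φ xstar : EReal)))
end

section
/- Let H be a real Hilbert space, Ψ : H → ℝ ∪ {+∞} proper, lower-semicontinuous and convex, and Φ : H → ℝ convex and continuously differentiable with L-Lipschitz continuous gradient. Suppose x* ∈ argmin(Ψ + Φ), and let (x_k) be generated by the accelerated forward-backward algorithm with parameter α > 3 and step size 0 < s < 1/L. Then the limit lim_{k→∞} [ k² ‖x_{k+1} − x_k‖² + (k+1)² (Θ(x_{k+1}) − Θ(x*)) ] exists. -/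
open Filter RealInnerProductSpace

/-!
For every `u`, a forward-backward step from `y` to `z` satisfies
`2 * s * Θ z + ‖z - u‖² ≤ 2 * s * Θ u + ‖y - u‖²`. A combination of the cases `u = xstar` and
`u = x k` makes a Lyapunov function decrease by at least a constant times `k * (Θ (x k) - min Θ)`,
which is therefore summable. The case `u = x k` alone bounds the growth of the energy
`k² ‖x (k + 1) - x k‖² + (k + α - 1)² (Θ (x (k + 1)) - min Θ)`, up to scaling of `Θ`, by these
summable terms; so the energy converges, and `k * ‖x (k + 1) - x k‖²` is summable too. The energy
divided by `k` is then summable, which forces the limit of the energy to be zero.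
-/

open Set AffineMap
open scoped Topology NNReal

section Sequences

theorem summable_and_exists_tendsto_of_succ_add_le {u c e : ℕ → ℝ} (hu : ∀ k, 0 ≤ u k)
    (hc : ∀ k, 0 ≤ c k) (he : Summable e) (h : ∀ k, u (k + 1) + c k ≤ u k + e k) :
    Summable c ∧ ∃ l, Tendsto u atTop (𝓝 l) := by
  obtain ⟨M, hM⟩ := he.hasSum.tendsto_sum_nat.bddAbove_range
  have hle (n : ℕ) : u n + ∑ i ∈ Finset.range n, c i ≤ u 0 + ∑ i ∈ Finset.range n, e i := by
    induction n with
    | zero => simp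
    | succ n ih => rw [Finset.sum_range_succ, Finset.sum_range_succ]; linarith [h n]
  have hc_sum : Summable c := summable_of_sum_range_le (c := u 0 + M) hc fun n => by
    linarith [hle n, hu n, hM (mem_range_self n)]
  set S : ℕ → ℝ := fun n => ∑ i ∈ Finset.range n, (e i - c i) with hS
  have hS_tendsto : Tendsto S atTop (𝓝 (∑' i, (e i - c i))) :=
    (he.sub hc_sum).hasSum.tendsto_sum_nat
  have hanti : Antitone (u - S) := antitone_nat_of_succ_le fun n => by
    simp only [Pi.sub_apply, hS, Finset.sum_range_succ]
    linarith [h n]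
  obtain ⟨B, hB⟩ := hS_tendsto.bddAbove_range
  have hbdd : BddBelow (range (u - S)) := ⟨-B, by
    rintro _ ⟨n, rfl⟩
    rw [Pi.sub_apply]
    linarith [hu n, hB (mem_range_self n)]⟩
  refine ⟨hc_sum, _, ((tendsto_atTop_ciInf hanti hbdd).add hS_tendsto).congr fun n => ?_⟩
  exact sub_add_cancel (u n) (S n)

theorem tendsto_zero_of_tendsto_of_summable_div {u : ℕ → ℝ} {l : ℝ} (hu : Tendsto u atTop (𝓝 l))
    (hsum : Summable fun k : ℕ => u k / k) : Tendsto u atTop (𝓝 0) := by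
  suffices hl : l = 0 from hl ▸ hu
  by_contra hl
  have hlu : (fun _ => l) =O[atTop] u :=
    ((Asymptotics.isEquivalent_const_iff_tendsto hl).2 hu).isBigO_symm
  have hone : (fun _ => (1 : ℝ)) =O[atTop] u := (Asymptotics.isBigO_const_const _ hl _).trans hlu
  refine Real.not_summable_natCast_inv (summable_of_isBigO_nat hsum ?_)
  simpa only [one_mul, div_eq_mul_inv] using
    hone.mul (Asymptotics.isBigO_refl (fun k : ℕ => (k : ℝ)⁻¹) atTop)

end Sequences

section FirstOrder

variable {E : Type*} [NormedAddCommGroup E] [NormedSpace ℝ E]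

theorem le_add_fderiv_add_sq_of_lipschitzWith {f : E → ℝ} {f' : E → E →L[ℝ] ℝ} {K : ℝ≥0}
    (hf : ∀ u, HasFDerivAt f (f' u) u) (hf' : LipschitzWith K f') (u v : E) :
    f v ≤ f u + f' u (v - u) + K / 2 * ‖v - u‖ ^ 2 := by
  have hline (t : ℝ) :
      HasDerivAt (fun t => f (lineMap u v t)) (f' (lineMap u v t) (v - u)) t :=
    (hf _).comp_hasDerivAt t hasDerivAt_lineMap
  have hbound (t : ℝ) :
      HasDerivAt (fun t => f u + t * f' u (v - u) + t ^ 2 * (K / 2 * ‖v - u‖ ^ 2))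
      (f' u (v - u) + t * (K * ‖v - u‖ ^ 2)) t := by
    refine ((((hasDerivAt_id t).mul_const _).const_add _).add
      ((hasDerivAt_pow 2 t).mul_const _)).congr_deriv ?_
    push_cast
    ring
  have hderiv_le (t : ℝ) (ht : 0 ≤ t) :
      f' (lineMap u v t) (v - u) ≤ f' u (v - u) + t * (K * ‖v - u‖ ^ 2) := by
    rw [← sub_le_iff_le_add', ← sub_apply]
    calc (f' (lineMap u v t) - f' u) (v - u)
        ≤ ‖f' (lineMap u v t) - f' u‖ * ‖v - u‖ :=
          (Real.le_norm_self _).trans (ContinuousLinearMap.le_opNorm _ _)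
      _ ≤ K * ‖lineMap u v t - u‖ * ‖v - u‖ := by gcongr; exact hf'.norm_sub_le _ _
      _ = t * (K * ‖v - u‖ ^ 2) := by
          rw [← vsub_eq_sub (lineMap u v t), lineMap_vsub_left, vsub_eq_sub, norm_smul,
            Real.norm_of_nonneg ht]
          ring
  have h := image_le_of_deriv_right_le_deriv_boundary
    (fun t _ => (hline t).continuousAt.continuousWithinAt)
    (fun t _ => (hline t).hasDerivWithinAt) (by simp)
    (fun t _ => (hbound t).continuousAt.continuousWithinAt)
    (fun t _ => (hbound t).hasDerivWithinAt) (fun t ht => hderiv_le t ht.1)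
    (right_mem_Icc.2 zero_le_one)
  simpa using h

theorem le_add_fderiv_of_isMinOn_add {D : Set E} {f g : E → ℝ} {g' : E →L[ℝ] ℝ} {p u : E}
    (hf : ConvexOn ℝ D f) (hg : HasFDerivAt g g' p) (hmin : IsMinOn (fun v => f v + g v) D p)
    (hp : p ∈ D) (hu : u ∈ D) : f p ≤ f u + g' (u - p) := by
  set φ : ℝ → ℝ := fun t => t * (f u - f p) + g (lineMap p u t) with hφ
  have hφ_deriv : HasDerivAt φ (f u - f p + g' (u - p)) 0 := by
    have hg0 : HasFDerivAt g g' (lineMap p u (0 : ℝ)) := by rwa [lineMap_apply_zero]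
    simpa using! ((hasDerivAt_id (0 : ℝ)).mul_const (f u - f p)).add
      (hg0.comp_hasDerivAt 0 hasDerivAt_lineMap)
  have hφ_min : IsMinOn φ (Icc 0 1) 0 := fun t ht => by
    have hmem : lineMap p u t ∈ D := hf.1.lineMap_mem hp hu ht
    have hconv : f (lineMap p u t) ≤ (1 - t) * f p + t * f u := by
      rw [lineMap_apply_module]
      exact hf.2 hp hu (sub_nonneg.2 ht.2) ht.1 (sub_add_cancel 1 t)
    have hle : f p + g p ≤ f (lineMap p u t) + g (lineMap p u t) := hmin hmem
    simp only [mem_ofPred_eq, hφ, lineMap_apply_zero]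
    linarith
  have hone : (1 : ℝ) ∈ posTangentConeAt (Icc 0 1) 0 :=
    mem_posTangentConeAt_of_segment_subset (by rw [zero_add, segment_eq_Icc zero_le_one])
  have hnonneg := hφ_min.localize.hasFDerivWithinAt_nonneg
    hφ_deriv.hasFDerivAt.hasFDerivWithinAt hone
  simp only [ContinuousLinearMap.toSpanSingleton_apply, one_smul] at hnonneg
  linarith

-- A convex function differentiable at `p` satisfies the minimality condition with `g = -f`.
theorem add_fderiv_le_of_convexOn {D : Set E} {f : E → ℝ} {f' : E →L[ℝ] ℝ} {p u : E}
    (hf : ConvexOn ℝ D f) (hf' : HasFDerivAt f f' p) (hp : p ∈ D) (hu : u ∈ D) :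
    f p + f' (u - p) ≤ f u := by
  have h := le_add_fderiv_of_isMinOn_add hf hf'.neg (fun v _ => by simp) hp hu
  rw [neg_apply] at h
  linarith

end FirstOrder

section ForwardBackward

variable {H : Type*} [NormedAddCommGroup H] [InnerProductSpace ℝ H]

theorem inner_sub_le_of_isMinOn_add_sq {D : Set H} {ψ : H → ℝ} {s : ℝ} {v z u : H}
    (hψ : ConvexOn ℝ D ψ) (hs : 0 < s)
    (hmin : IsMinOn (fun w => ψ w + 1 / (2 * s) * ‖w - v‖ ^ 2) D z) (hz : z ∈ D) (hu : u ∈ D) :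
    ⟪v - z, u - z⟫ ≤ s * (ψ u - ψ z) := by
  have hderiv := (((hasFDerivAt_id z).sub_const v).norm_sq).const_mul (1 / (2 * s))
  have h := le_add_fderiv_of_isMinOn_add hψ hderiv hmin hz hu
  simp only [id_eq, ContinuousLinearMap.comp_id, nsmul_eq_mul, Nat.cast_ofNat,
    smul_apply, innerSL_apply_apply, smul_eq_mul] at h
  rw [← neg_sub z v, inner_neg_left]
  field_simp at h
  linarith

theorem forwardBackward_descent {D : Set H} {ψ Φ : H → ℝ} {Φ' : H → H} {K : ℝ≥0} {s : ℝ}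
    (hψ : ConvexOn ℝ D ψ) (hΦ : ConvexOn ℝ univ Φ)
    (hΦ' : ∀ u, HasFDerivAt Φ (innerSL ℝ (Φ' u)) u) (hlip : LipschitzWith K Φ')
    (hs : 0 < s) (hsK : s * K ≤ 1) {y z u : H}
    (hmin : IsMinOn (fun w => ψ w + 1 / (2 * s) * ‖w - (y - s • Φ' y)‖ ^ 2) D z)
    (hz : z ∈ D) (hu : u ∈ D) :
    2 * s * (ψ z + Φ z) + ‖z - u‖ ^ 2 ≤ 2 * s * (ψ u + Φ u) + ‖y - u‖ ^ 2 := by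
  have hlip' : LipschitzWith K fun u => innerSL ℝ (Φ' u) := .of_dist_le_mul fun a b => by
    rw [dist_eq_norm, ← map_sub, innerSL_apply_norm, ← dist_eq_norm]
    exact hlip.dist_le_mul a b
  have hprox : ⟪y - z, u - z⟫ - s * ⟪Φ' y, u - z⟫ ≤ s * (ψ u - ψ z) := by
    have h := inner_sub_le_of_isMinOn_add_sq hψ hs hmin hz hu
    rwa [sub_right_comm, inner_sub_left, real_inner_smul_left] at h
  have hupper : s * Φ z ≤ s * (Φ y + ⟪Φ' y, z - y⟫) + ‖z - y‖ ^ 2 / 2 := by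
    have h := mul_le_mul_of_nonneg_left
      (le_add_fderiv_add_sq_of_lipschitzWith hΦ' hlip' y z) hs.le
    have hK := mul_le_mul_of_nonneg_right hsK (sq_nonneg ‖z - y‖)
    rw [innerSL_apply_apply] at h
    linarith
  have hlower : s * (Φ y + ⟪Φ' y, u - y⟫) ≤ s * Φ u :=
    mul_le_mul_of_nonneg_left
      (add_fderiv_le_of_convexOn hΦ (hΦ' y) (mem_univ y) (mem_univ u)) hs.le
  have hinner : s * ⟪Φ' y, u - y⟫ = s * ⟪Φ' y, z - y⟫ + s * ⟪Φ' y, u - z⟫ := by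
    rw [← mul_add, ← inner_add_right, add_comm, sub_add_sub_cancel]
  have hcosine : ‖y - u‖ ^ 2 = ‖z - y‖ ^ 2 - 2 * ⟪y - z, u - z⟫ + ‖z - u‖ ^ 2 := by
    rw [norm_sub_rev z y, norm_sub_rev z u, ← norm_sub_sq_real, sub_sub_sub_cancel_right]
  linarith

end ForwardBackward

section Inertial

variable {H : Type*} [NormedAddCommGroup H] [InnerProductSpace ℝ H]

/-- Sequences `x`, `y` in which `y` extrapolates `x` with Nesterov's inertial coefficients and each
step from `y` decreases `θ + ‖· - u‖²` relative to every `u ∈ D`; for the accelerated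
forward-backward algorithm `θ = 2 * s * Θ` and `D` is the effective domain. Indices are shifted, so
that `k` here is `k - 1` in the usual formulas and the first step leads from `y 1` to `x 2`. The
points `x 0` and `x 1` may lie outside `D`, where `θ` carries no information. -/
structure IsInertialDescent (D : Set H) (θ : H → ℝ) (α : ℝ) (x y : ℕ → H) : Prop where
  extrapolation (k : ℕ) : y (k + 1) = x (k + 1) + ((k : ℝ) / (k + α)) • (x (k + 1) - x k)
  mem (k : ℕ) : x (k + 2) ∈ D
  descent (k : ℕ) {u : H} (hu : u ∈ D) :
    θ (x (k + 2)) + ‖x (k + 2) - u‖ ^ 2 ≤ θ u + ‖y (k + 1) - u‖ ^ 2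

/-- The Lyapunov function of an inertial descent method, anchored at a minimizer `xstar`. -/
def inertialLyapunov (θ : H → ℝ) (α : ℝ) (x : ℕ → H) (xstar : H) (k : ℕ) : ℝ :=
  (k + α - 1) ^ 2 * (θ (x (k + 1)) - θ xstar) +
    ‖(α - 1) • (x (k + 1) - xstar) + (k : ℝ) • (x (k + 1) - x k)‖ ^ 2

/-- The energy of an inertial descent method: rescaled squared velocity plus rescaled gap. -/
def inertialEnergy (θ : H → ℝ) (α : ℝ) (x : ℕ → H) (xstar : H) (k : ℕ) : ℝ :=
  k ^ 2 * ‖x (k + 1) - x k‖ ^ 2 + (k + α - 1) ^ 2 * (θ (x (k + 1)) - θ xstar)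

theorem norm_smul_add_smul_sq (a b : ℝ) (u v : H) :
    ‖a • u + (a + b) • v‖ ^ 2 =
      (a + b) * (a * ‖u + v‖ ^ 2 + b * ‖v‖ ^ 2) - a * b * ‖u‖ ^ 2 := by
  simp only [norm_add_sq_real, inner_smul_left, inner_smul_right, norm_smul, mul_pow,
    Real.norm_eq_abs, sq_abs, conj_trivial]
  ring

namespace IsInertialDescent

variable {D : Set H} {θ : H → ℝ} {α : ℝ} {x y : ℕ → H} {xstar : H}

theorem smul_extrapolation_sub (h : IsInertialDescent D θ α x y) (hα : 0 < α) (k : ℕ) :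
    ((k : ℝ) + α) • (y (k + 1) - x (k + 1)) = (k : ℝ) • (x (k + 1) - x k) := by
  have hne : (k : ℝ) + α ≠ 0 := by positivity
  rw [h.extrapolation, add_sub_cancel_left, smul_smul, mul_div_cancel₀ _ hne]

theorem gap_nonneg (h : IsInertialDescent D θ α x y) (hmin : IsMinOn θ D xstar) {k : ℕ}
    (hk : 1 ≤ k) : 0 ≤ θ (x (k + 1)) - θ xstar := by
  obtain ⟨n, rfl⟩ := Nat.exists_eq_add_of_le' hk
  exact sub_nonneg.2 (hmin (h.mem n))

theorem inertialLyapunov_nonneg (h : IsInertialDescent D θ α x y) (hmin : IsMinOn θ D xstar)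
    {k : ℕ} (hk : 1 ≤ k) : 0 ≤ inertialLyapunov θ α x xstar k := by
  have := h.gap_nonneg hmin hk
  unfold inertialLyapunov
  positivity

theorem inertialEnergy_nonneg (h : IsInertialDescent D θ α x y) (hmin : IsMinOn θ D xstar)
    {k : ℕ} (hk : 1 ≤ k) : 0 ≤ inertialEnergy θ α x xstar k := by
  have := h.gap_nonneg hmin hk
  unfold inertialEnergy
  positivity

theorem descent_self (h : IsInertialDescent D θ α x y) {k : ℕ} (hk : 1 ≤ k) :
    θ (x (k + 2)) + ‖x (k + 2) - x (k + 1)‖ ^ 2 ≤ θ (x (k + 1)) + ‖y (k + 1) - x (k + 1)‖ ^ 2 := by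
  obtain ⟨n, rfl⟩ := Nat.exists_eq_add_of_le' hk
  exact h.descent (n + 1) (h.mem n)

-- Weight the comparison with `xstar` by `α - 1` and the one with `x (k + 1)` by `k + 1`; by
-- `norm_smul_add_smul_sq` the squared distances combine into the anchored term.
theorem inertialLyapunov_succ_add_le (h : IsInertialDescent D θ α x y) (hα : 3 ≤ α)
    (hmin : IsMinOn θ D xstar) (hxstar : xstar ∈ D) {k : ℕ} (hk : 1 ≤ k) :
    inertialLyapunov θ α x xstar (k + 1) + (α - 3) * (k * (θ (x (k + 1)) - θ xstar)) ≤
      inertialLyapunov θ α x xstar k := by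
  set r := x (k + 1) - xstar with hr
  set e := x (k + 2) - x (k + 1) with he
  set f := y (k + 1) - x (k + 1)
  have hstar : θ (x (k + 2)) + ‖r + e‖ ^ 2 ≤ θ xstar + ‖r + f‖ ^ 2 := by
    have h1 : r + e = x (k + 2) - xstar := by rw [add_comm]; exact sub_add_sub_cancel _ _ _
    have h2 : r + f = y (k + 1) - xstar := by rw [add_comm]; exact sub_add_sub_cancel _ _ _
    rw [h1, h2]
    exact h.descent k hxstar
  have hself : θ (x (k + 2)) + ‖e‖ ^ 2 ≤ θ (x (k + 1)) + ‖f‖ ^ 2 := h.descent_self hk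
  have hnew : (α - 1) • (x (k + 2) - xstar) + ((k + 1 : ℕ) : ℝ) • e =
      (α - 1) • r + ((α - 1) + ((k : ℝ) + 1)) • e := by
    rw [hr, he]
    push_cast
    module
  have hold : (α - 1) • r + (k : ℝ) • (x (k + 1) - x k) =
      (α - 1) • r + ((α - 1) + ((k : ℝ) + 1)) • f := by
    rw [← h.smul_extrapolation_sub (by linarith) k, sub_add_add_cancel, add_comm α]
  have hstar' := mul_le_mul_of_nonneg_left hstar
    (mul_nonneg (by positivity) (by linarith) : 0 ≤ ((k : ℝ) + α) * (α - 1))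
  have hself' := mul_le_mul_of_nonneg_left hself
    (by positivity : 0 ≤ ((k : ℝ) + α) * ((k : ℝ) + 1))
  have hslack : 0 ≤ (α - 3 + (α - 2) ^ 2) * (θ (x (k + 1)) - θ xstar) :=
    mul_nonneg (add_nonneg (sub_nonneg.2 hα) (sq_nonneg _)) (h.gap_nonneg hmin hk)
  rw [inertialLyapunov, inertialLyapunov, hnew, hold, norm_smul_add_smul_sq,
    norm_smul_add_smul_sq]
  push_cast
  linarith

theorem inertialEnergy_succ_add_le (h : IsInertialDescent D θ α x y) (hα : 2 ≤ α)
    (hmin : IsMinOn θ D xstar) {k : ℕ} (hk : 1 ≤ k) :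
    inertialEnergy θ α x xstar (k + 1) + (k + 1 : ℕ) * ‖x (k + 2) - x (k + 1)‖ ^ 2 ≤
      inertialEnergy θ α x xstar k + 2 * (α + 1) * (k * (θ (x (k + 1)) - θ xstar)) := by
  have hk' : (1 : ℝ) ≤ k := Nat.one_le_cast.2 hk
  have hself := mul_le_mul_of_nonneg_left (h.descent_self hk) (sq_nonneg ((k : ℝ) + α))
  have hscaled : ((k : ℝ) + α) ^ 2 * ‖y (k + 1) - x (k + 1)‖ ^ 2 =
      (k : ℝ) ^ 2 * ‖x (k + 1) - x k‖ ^ 2 := by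
    have hnorm := congrArg (‖·‖ ^ 2) (h.smul_extrapolation_sub (by linarith) k)
    simpa only [norm_smul, mul_pow, Real.norm_eq_abs, sq_abs] using hnorm
  have hvelocity : ((k : ℝ) + 1) * ‖x (k + 2) - x (k + 1)‖ ^ 2 ≤
      (((k : ℝ) + α) ^ 2 - ((k : ℝ) + 1) ^ 2) * ‖x (k + 2) - x (k + 1)‖ ^ 2 := by
    gcongr
    nlinarith
  have hgap : (((k : ℝ) + α) ^ 2 - ((k : ℝ) + α - 1) ^ 2) * (θ (x (k + 1)) - θ xstar) ≤
      2 * (α + 1) * k * (θ (x (k + 1)) - θ xstar) := by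
    gcongr
    · exact h.gap_nonneg hmin hk
    · nlinarith
  rw [inertialEnergy, inertialEnergy]
  push_cast
  linarith

theorem summable_natCast_mul_gap (h : IsInertialDescent D θ α x y) (hα : 3 < α)
    (hmin : IsMinOn θ D xstar) (hxstar : xstar ∈ D) :
    Summable fun k : ℕ => k * (θ (x (k + 1)) - θ xstar) := by
  refine (summable_mul_left_iff (sub_pos.2 hα).ne').1 ((summable_nat_add_iff 1).1 ?_)
  refine (summable_and_exists_tendsto_of_succ_add_le
    (u := fun k => inertialLyapunov θ α x xstar (k + 1))
    (fun k => h.inertialLyapunov_nonneg hmin k.succ_pos) (fun k => ?_) summable_zero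
    (fun k => ?_)).1
  · have := h.gap_nonneg hmin k.succ_pos
    have := sub_pos.2 hα
    positivity
  · simpa using h.inertialLyapunov_succ_add_le hα.le hmin hxstar k.succ_pos

theorem summable_velocity_and_exists_tendsto_inertialEnergy (h : IsInertialDescent D θ α x y)
    (hα : 3 < α) (hmin : IsMinOn θ D xstar) (hxstar : xstar ∈ D) :
    (Summable fun k : ℕ => k * ‖x (k + 1) - x k‖ ^ 2) ∧
      ∃ l, Tendsto (inertialEnergy θ α x xstar) atTop (𝓝 l) := by
  have hgap := (h.summable_natCast_mul_gap hα hmin hxstar).mul_left (2 * (α + 1))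
  obtain ⟨hsum, l, hl⟩ := summable_and_exists_tendsto_of_succ_add_le
    (fun k => h.inertialEnergy_nonneg hmin k.succ_pos) (fun k => by positivity)
    ((summable_nat_add_iff 1).2 hgap)
    (fun k => h.inertialEnergy_succ_add_le (by linarith) hmin k.succ_pos)
  exact ⟨(summable_nat_add_iff 2).1 hsum, l, (tendsto_add_atTop_iff_nat 1).1 hl⟩

theorem inertialEnergy_div_le (h : IsInertialDescent D θ α x y) (hα : 1 ≤ α)
    (hmin : IsMinOn θ D xstar) {k : ℕ} (hk : 1 ≤ k) :
    inertialEnergy θ α x xstar k / k ≤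
      k * ‖x (k + 1) - x k‖ ^ 2 + α ^ 2 * (k * (θ (x (k + 1)) - θ xstar)) := by
  have hk' : (1 : ℝ) ≤ k := Nat.one_le_cast.2 hk
  have hcoeff : (k + α - 1) ^ 2 * (θ (x (k + 1)) - θ xstar) ≤
      (α * k) ^ 2 * (θ (x (k + 1)) - θ xstar) := by
    gcongr
    · exact h.gap_nonneg hmin hk
    · linarith
    · nlinarith
  rw [div_le_iff₀ (by positivity), inertialEnergy]
  linarith

theorem tendsto_inertialEnergy (h : IsInertialDescent D θ α x y) (hα : 3 < α)
    (hmin : IsMinOn θ D xstar) (hxstar : xstar ∈ D) :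
    Tendsto (inertialEnergy θ α x xstar) atTop (𝓝 0) := by
  obtain ⟨hvelocity, l, hl⟩ :=
    h.summable_velocity_and_exists_tendsto_inertialEnergy hα hmin hxstar
  have hgap := (h.summable_natCast_mul_gap hα hmin hxstar).mul_left (α ^ 2)
  refine tendsto_zero_of_tendsto_of_summable_div hl ((summable_nat_add_iff 1).1 ?_)
  refine ((summable_nat_add_iff 1).2 (hvelocity.add hgap)).of_nonneg_of_le (fun k => ?_)
    (fun k => h.inertialEnergy_div_le (by linarith) hmin k.succ_pos)
  exact div_nonneg (h.inertialEnergy_nonneg hmin k.succ_pos) (Nat.cast_nonneg _)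

theorem tendsto_sq_mul_velocity (h : IsInertialDescent D θ α x y) (hα : 3 < α)
    (hmin : IsMinOn θ D xstar) (hxstar : xstar ∈ D) :
    Tendsto (fun k : ℕ => (k : ℝ) ^ 2 * ‖x (k + 1) - x k‖ ^ 2) atTop (𝓝 0) := by
  refine squeeze_zero' (.of_forall fun k => by positivity) ?_
    (h.tendsto_inertialEnergy hα hmin hxstar)
  filter_upwards [eventually_ge_atTop 1] with k hk
  exact le_add_of_nonneg_right (mul_nonneg (sq_nonneg _) (h.gap_nonneg hmin hk))

theorem tendsto_sq_mul_gap (h : IsInertialDescent D θ α x y) (hα : 3 < α)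
    (hmin : IsMinOn θ D xstar) (hxstar : xstar ∈ D) :
    Tendsto (fun k : ℕ => ((k : ℝ) + 1) ^ 2 * (θ (x (k + 1)) - θ xstar)) atTop (𝓝 0) := by
  refine squeeze_zero' ?_ ?_ (h.tendsto_inertialEnergy hα hmin hxstar) <;>
    filter_upwards [eventually_ge_atTop 1] with k hk
  · exact mul_nonneg (sq_nonneg _) (h.gap_nonneg hmin hk)
  · refine le_add_of_nonneg_of_le (by positivity) ?_
    gcongr
    · exact h.gap_nonneg hmin hk
    · linarith

theorem tendsto_sq_mul_velocity_add_sq_mul_gap {c : ℝ}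
    (h : IsInertialDescent D (fun u => c * θ u) α x y) (hc : 0 < c) (hα : 3 < α)
    (hmin : IsMinOn θ D xstar) (hxstar : xstar ∈ D) :
    Tendsto (fun k : ℕ => (k : ℝ) ^ 2 * ‖x (k + 1) - x k‖ ^ 2 +
      ((k : ℝ) + 1) ^ 2 * (θ (x (k + 1)) - θ xstar)) atTop (𝓝 0) := by
  have hmin' : IsMinOn (fun u => c * θ u) D xstar :=
    hmin.comp_mono (monotone_mul_left_of_nonneg hc.le)
  have hgap := (h.tendsto_sq_mul_gap hα hmin' hxstar).const_mul c⁻¹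
  have hsum := (h.tendsto_sq_mul_velocity hα hmin' hxstar).add hgap
  rw [mul_zero, add_zero] at hsum
  refine hsum.congr fun k => ?_
  field_simp

end IsInertialDescent

end Inertial

section ExtendedReal

variable {H : Type*}

theorem ne_top_and_isMinOn_toReal_add {Ψ : H → EReal} {g : H → ℝ} {z : H}
    (hbot : ∀ u, Ψ u ≠ ⊥) (hproper : ∃ u, Ψ u ≠ ⊤)
    (hmin : ∀ u, Ψ z + (g z : EReal) ≤ Ψ u + (g u : EReal)) :
    Ψ z ≠ ⊤ ∧ IsMinOn (fun u => (Ψ u).toReal + g u) {u | Ψ u ≠ ⊤} z := by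
  have hz : Ψ z ≠ ⊤ := by
    obtain ⟨u, hu⟩ := hproper
    intro hz
    have htop := hmin u
    rw [hz, EReal.top_add_coe, top_le_iff] at htop
    exact EReal.add_ne_top hu (EReal.coe_ne_top _) htop
  refine ⟨hz, fun u (hu : Ψ u ≠ ⊤) => ?_⟩
  have hreal := hmin u
  rw [← EReal.coe_toReal hz (hbot z), ← EReal.coe_toReal hu (hbot u)] at hreal
  exact_mod_cast hreal

theorem convexOn_toReal [AddCommMonoid H] [Module ℝ H] {Ψ : H → EReal} (hbot : ∀ u, Ψ u ≠ ⊥)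
    (hconvex : ∀ u v : H, ∀ a b : ℝ, 0 ≤ a → 0 ≤ b → a + b = 1 →
      Ψ (a • u + b • v) ≤ (a : EReal) * Ψ u + (b : EReal) * Ψ v) :
    ConvexOn ℝ {u | Ψ u ≠ ⊤} fun u => (Ψ u).toReal := by
  have hle {u v : H} (hu : Ψ u ≠ ⊤) (hv : Ψ v ≠ ⊤) {a b : ℝ} (ha : 0 ≤ a) (hb : 0 ≤ b)
      (hab : a + b = 1) :
      Ψ (a • u + b • v) ≤ ((a * (Ψ u).toReal + b * (Ψ v).toReal : ℝ) : EReal) := by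
    have h := hconvex u v a b ha hb hab
    rw [← EReal.coe_toReal hu (hbot u), ← EReal.coe_toReal hv (hbot v)] at h
    exact_mod_cast h
  refine ⟨fun u hu v hv a b ha hb hab => ?_, fun u hu v hv a b ha hb hab => ?_⟩
  · exact ne_top_of_le_ne_top (EReal.coe_ne_top _) (hle hu hv ha hb hab)
  · exact EReal.toReal_le_toReal (hle hu hv ha hb hab) (hbot _) (EReal.coe_ne_top _)

end ExtendedReal

theorem isInertialDescent_forwardBackward {H : Type*} [NormedAddCommGroup H]
    [InnerProductSpace ℝ H] {D : Set H} {ψ Φ : H → ℝ} {Φ' : H → H} {K : ℝ≥0} {s α : ℝ}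
    (hψ : ConvexOn ℝ D ψ) (hΦ : ConvexOn ℝ univ Φ)
    (hΦ' : ∀ u, HasFDerivAt Φ (innerSL ℝ (Φ' u)) u) (hlip : LipschitzWith K Φ')
    (hs : 0 < s) (hsK : s * K ≤ 1) {x y : ℕ → H}
    (hy : ∀ k : ℕ, 1 ≤ k →
      y k = x k + (((k : ℝ) - 1) / ((k : ℝ) + α - 1)) • (x k - x (k - 1)))
    (hx : ∀ k : ℕ, 1 ≤ k → x (k + 1) ∈ D ∧
      IsMinOn (fun u => ψ u + 1 / (2 * s) * ‖u - (y k - s • Φ' (y k))‖ ^ 2) D (x (k + 1))) :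
    IsInertialDescent D (fun u => 2 * s * (ψ u + Φ u)) α x y where
  extrapolation k := by
    rw [hy (k + 1) k.succ_pos, Nat.add_sub_cancel]
    congr 3 <;> push_cast <;> ring
  mem k := (hx (k + 1) k.succ_pos).1
  descent k _ hu := by
    obtain ⟨hmem, hmin⟩ := hx (k + 1) k.succ_pos
    exact forwardBackward_descent hψ hΦ hΦ' hlip hs hsK hmin hmem hu

theorem fista_lemma_limit_exists_general
    {H : Type*} [NormedAddCommGroup H] [InnerProductSpace ℝ H]
    (Ψ : H → EReal) (Φ : H → ℝ) (Φ' : H → H) (L : ℝ≥0) (s α : ℝ)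
    (hΨ_ne_bot : ∀ u, Ψ u ≠ ⊥) (hΨ_proper : ∃ u, Ψ u ≠ ⊤)
    (hΨ_convex : ∀ u v : H, ∀ a b : ℝ, 0 ≤ a → 0 ≤ b → a + b = 1 →
      Ψ (a • u + b • v) ≤ (a : EReal) * Ψ u + (b : EReal) * Ψ v)
    (hΦ_convex : ConvexOn ℝ univ Φ)
    (hΦ_diff : ∀ u, HasFDerivAt Φ (innerSL ℝ (Φ' u)) u)
    (hΦ_lip : LipschitzWith L Φ')
    (hα : 3 < α) (hs : 0 < s) (hsL : s * L ≤ 1)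
    (x y : ℕ → H)
    (hy : ∀ k : ℕ, 1 ≤ k →
      y k = x k + (((k : ℝ) - 1) / ((k : ℝ) + α - 1)) • (x k - x (k - 1)))
    (hx : ∀ k : ℕ, 1 ≤ k → ∀ u : H,
      Ψ (x (k + 1)) + ((1 / (2 * s) * ‖x (k + 1) - (y k - s • Φ' (y k))‖ ^ 2 : ℝ) : EReal)
        ≤ Ψ u + ((1 / (2 * s) * ‖u - (y k - s • Φ' (y k))‖ ^ 2 : ℝ) : EReal))
    (xstar : H)
    (hxstar : ∀ u, Ψ xstar + (Φ xstar : EReal) ≤ Ψ u + (Φ u : EReal)) :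
    Tendsto (fun k : ℕ => (((k : ℝ) ^ 2 * ‖x (k + 1) - x k‖ ^ 2 : ℝ) : EReal) +
        ((((k : ℝ) + 1) ^ 2 : ℝ) : EReal) * ((Ψ (x (k + 1)) + (Φ (x (k + 1)) : EReal)) -
          (Ψ xstar + (Φ xstar : EReal)))) atTop (𝓝 0) := by
  obtain ⟨hstar_mem, hstar_min⟩ := ne_top_and_isMinOn_toReal_add hΨ_ne_bot hΨ_proper hxstar
  have hdescent := isInertialDescent_forwardBackward (convexOn_toReal hΨ_ne_bot hΨ_convex)
    hΦ_convex hΦ_diff hΦ_lip hs hsL hy fun k hk =>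
      ne_top_and_isMinOn_toReal_add hΨ_ne_bot hΨ_proper
        (g := fun u => 1 / (2 * s) * ‖u - (y k - s • Φ' (y k))‖ ^ 2) (hx k hk)
  have hreal := hdescent.tendsto_sq_mul_velocity_add_sq_mul_gap (by positivity) hα hstar_min
    hstar_mem
  refine (EReal.tendsto_coe.2 hreal).congr' ?_
  filter_upwards [eventually_ge_atTop 1] with k hk
  obtain ⟨n, rfl⟩ := Nat.exists_eq_add_of_le' hk
  rw [← EReal.coe_toReal (hdescent.mem n) (hΨ_ne_bot _),
    ← EReal.coe_toReal hstar_mem (hΨ_ne_bot _)]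
  push_cast
  rfl

/-- Lemma 1: `lim_k [k²‖x_{k+1}-x_k‖² + (k+1)²(Θ(x_{k+1})-Θ(x*))]` exists. -/
theorem fista_lemma_limit_exists
    {H : Type*} [NormedAddCommGroup H] [InnerProductSpace ℝ H] [CompleteSpace H]
    (Ψ : H → EReal) (Φ : H → ℝ) (Φ' : H → H) (L s α : ℝ)
    (hΨ_ne_bot : ∀ u, Ψ u ≠ ⊥) (hΨ_proper : ∃ u, Ψ u ≠ ⊤)
    (hΨ_lsc : LowerSemicontinuous Ψ)
    (hΨ_convex : ∀ u v : H, ∀ a b : ℝ, 0 ≤ a → 0 ≤ b → a + b = 1 →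
      Ψ (a • u + b • v) ≤ (a : EReal) * Ψ u + (b : EReal) * Ψ v)
    (hΦ_convex : ConvexOn ℝ Set.univ Φ)
    (hΦ_diff : ∀ u, HasGradientAt Φ (Φ' u) u)
    (hΦ_lip : LipschitzWith (Real.toNNReal L) Φ')
    (hα : 3 < α) (hs : 0 < s) (hsL : s < 1 / L)
    (x y : ℕ → H)
    (hy : ∀ k : ℕ, 1 ≤ k →
      y k = x k + (((k : ℝ) - 1) / ((k : ℝ) + α - 1)) • (x k - x (k - 1)))
    (hx : ∀ k : ℕ, 1 ≤ k → ∀ u : H,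
      Ψ (x (k + 1)) + ((1 / (2 * s) * ‖x (k + 1) - (y k - s • Φ' (y k))‖ ^ 2 : ℝ) : EReal)
        ≤ Ψ u + ((1 / (2 * s) * ‖u - (y k - s • Φ' (y k))‖ ^ 2 : ℝ) : EReal))
    (xstar : H)
    (hxstar : ∀ u, Ψ xstar + (Φ xstar : EReal) ≤ Ψ u + (Φ u : EReal)) :
    ∃ l : EReal,
      Tendsto (fun k : ℕ => (((k : ℝ) ^ 2 * ‖x (k + 1) - x k‖ ^ 2 : ℝ) : EReal) +
          ((((k : ℝ) + 1) ^ 2 : ℝ) : EReal) * ((Ψ (x (k + 1)) + (Φ (x (k + 1)) : EReal)) - (Ψ xstar + (Φ xstar : EReal)))) atTop (nhds l) := by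
  have hL : 0 < L := one_div_pos.1 (hs.trans hsL)
  have hsL' : s * L.toNNReal ≤ 1 := by
    rw [Real.coe_toNNReal L hL.le]
    exact ((lt_div_iff₀ hL).1 hsL).le
  exact ⟨0, fista_lemma_limit_exists_general Ψ Φ Φ' L.toNNReal s α hΨ_ne_bot hΨ_proper hΨ_convex
    hΦ_convex (fun u => (hΦ_diff u).hasFDerivAt) hΦ_lip hα hs hsL' x y hy hx xstar hxstar⟩
end

section
/- Let H be a real Hilbert space, Ψ : H → ℝ ∪ {+∞} proper, lower-semicontinuous and convex, and Φ : H → ℝ convex and continuously differentiable with L-Lipschitz continuous gradient. Suppose x* ∈ argmin(Ψ + Φ), and let (x_k) be generated by the accelerated forward-backward algorithm with parameter α ≥ 3 and step size 0 < s < 1/L. With θ_k = Θ(x_k) − Θ(x*) and d_k = (1/(2s))‖x_{k+1} − x_k‖², one has, for every k ≥ 1, [k² d_k + (k+1)² θ_{k+1}] − [(k−1)² d_{k−1} + k² θ_k] ≤ 2(k+1) θ_{k+1}. -/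
open Filter RealInnerProductSpace
open scoped NNReal Topology

/-!
Write `c = 1 / (2s)`. The prox objective is strongly convex, and since `sL ≤ 1` the smooth term at
`x_{k+1}` exceeds its linearization at `y_k` by at most `c‖x_{k+1} - y_k‖²`. Together these give
the forward-backward inequality
`Θ(x_{k+1}) + c‖u - x_{k+1}‖² ≤ Θ(u) + c‖u - y_k‖²` for every `u`.
At `u = x_k` it says `θ_{k+1} + d_k ≤ θ_k + ((k-1)/(k+α-1))² d_{k-1}`. Multiplying by `k²` turns
the last coefficient into at most `(k-1)²`, and `(k+1)² - k² = 2k + 1 ≤ 2(k+1)`.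
-/

lemma exists_coe_eq_of_coe_le {a : EReal} {m : ℝ} (h : m ≤ a) (ha : a ≠ ⊤) :
    ∃ r : ℝ, a = r :=
  ⟨a.toReal, (EReal.coe_toReal ha (ne_bot_of_le_ne_bot (EReal.coe_ne_bot m) h)).symm⟩

lemma exists_coe_eq_of_forall_le {X : Type*} {Ψ : X → EReal} {Φ : X → ℝ} {a : X}
    (hΨ : ∃ u, Ψ u ≠ ⊤) (ha : Ψ a ≠ ⊥) (h_min : ∀ u, Ψ a + (Φ a : EReal) ≤ Ψ u + Φ u) :
    ∃ m : ℝ, Ψ a + (Φ a : EReal) = m := by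
  obtain ⟨u, hu⟩ := hΨ
  have h_top : Ψ a + (Φ a : EReal) ≠ ⊤ :=
    ((h_min u).trans_lt (EReal.add_lt_top hu (EReal.coe_ne_top _))).ne
  have h_bot : Ψ a + (Φ a : EReal) ≠ ⊥ := EReal.add_ne_bot_iff.2 ⟨ha, EReal.coe_ne_bot _⟩
  exact ⟨_, (EReal.coe_toReal h_top h_bot).symm⟩

lemma sub_add_le_sub_add_of_add_le_add {a b q r : EReal} (h : a + q ≤ b + r) (c : EReal) :
    a - c + q ≤ b - c + r := by
  simpa only [sub_eq_add_neg, add_right_comm] using add_le_add_left h (-c)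

lemma add_coe_le_add_coe_of_sub_le {a b : EReal} {q r q' r' : ℝ} (h : a + q ≤ b + r)
    (h_sub : q' - q ≤ r' - r) : a + q' ≤ b + r' :=
  calc a + q' = a + q + (q' - q : ℝ) := by
        rw [add_assoc, ← EReal.coe_add, add_sub_cancel]
    _ ≤ b + r + (r' - r : ℝ) := add_le_add h (EReal.coe_le_coe_iff.2 h_sub)
    _ = b + r' := by rw [add_assoc, ← EReal.coe_add, add_sub_cancel]

section Gradient

variable {H : Type*} [NormedAddCommGroup H] [InnerProductSpace ℝ H] [CompleteSpace H]
  {Φ : H → ℝ} {Φ' : H → H} {S : Set H} {g p u : H}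

lemma hasDerivAt_comp_lineMap_of_hasGradientAt {t : ℝ}
    (hg : HasGradientAt Φ g (AffineMap.lineMap p u t)) :
    HasDerivAt (fun t : ℝ ↦ Φ (AffineMap.lineMap p u t)) ⟪g, u - p⟫ t :=
  hg.hasFDerivAt.comp_hasDerivAt t AffineMap.hasDerivAt_lineMap

lemma add_inner_gradient_le_of_convexOn (hΦ : ConvexOn ℝ S Φ) (hp : p ∈ S) (hu : u ∈ S)
    (hg : HasGradientAt Φ g p) : Φ p + ⟪g, u - p⟫ ≤ Φ u := by
  have h_line : HasDerivAt (Φ ∘ AffineMap.lineMap p u) ⟪g, u - p⟫ (0 : ℝ) :=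
    hasDerivAt_comp_lineMap_of_hasGradientAt (by simpa using hg)
  have h_slope := (hΦ.comp_affineMap (AffineMap.lineMap p u)).le_slope_of_hasDerivAt
    (by simpa using hp) (by simpa using hu) one_pos h_line
  simp only [slope_def_field, Function.comp_apply, AffineMap.lineMap_apply_one,
    AffineMap.lineMap_apply_zero, sub_zero, div_one] at h_slope
  linarith

lemma le_add_inner_gradient_add_sq_of_lipschitzOnWith {K : ℝ≥0} (hS : Convex ℝ S)
    (hΦ : ∀ w ∈ S, HasGradientAt Φ (Φ' w) w) (hΦ' : LipschitzOnWith K Φ' S)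
    (hp : p ∈ S) (hu : u ∈ S) : Φ u ≤ Φ p + ⟪Φ' p, u - p⟫ + K / 2 * ‖u - p‖ ^ 2 := by
  have h_mem {t : ℝ} (ht : t ∈ Set.Icc 0 1) : AffineMap.lineMap p u t ∈ S :=
    hS.lineMap_mem hp hu ht
  have h_line {t : ℝ} (ht : t ∈ Set.Icc 0 1) :
      HasDerivAt (fun t : ℝ ↦ Φ (AffineMap.lineMap p u t))
        ⟪Φ' (AffineMap.lineMap p u t), u - p⟫ t :=
    hasDerivAt_comp_lineMap_of_hasGradientAt (hΦ _ (h_mem ht))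
  have h_bound (t : ℝ) :
      HasDerivAt (fun t : ℝ ↦ Φ p + t * ⟪Φ' p, u - p⟫ + t ^ 2 * (K / 2 * ‖u - p‖ ^ 2))
        (⟪Φ' p, u - p⟫ + t * (K * ‖u - p‖ ^ 2)) t := by
    refine ((((hasDerivAt_id t).mul_const _).const_add _).add
      ((hasDerivAt_pow 2 t).mul_const _)).congr_deriv ?_
    push_cast
    ring
  have h_deriv_le {t : ℝ} (ht : t ∈ Set.Icc 0 1) :
      ⟪Φ' (AffineMap.lineMap p u t), u - p⟫ ≤ ⟪Φ' p, u - p⟫ + t * (K * ‖u - p‖ ^ 2) := by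
    rw [← sub_le_iff_le_add', ← inner_sub_left]
    calc ⟪Φ' (AffineMap.lineMap p u t) - Φ' p, u - p⟫
        ≤ ‖Φ' (AffineMap.lineMap p u t) - Φ' p‖ * ‖u - p‖ := real_inner_le_norm _ _
      _ ≤ K * ‖AffineMap.lineMap p u t - p‖ * ‖u - p‖ := by
          gcongr
          exact hΦ'.norm_sub_le (h_mem ht) hp
      _ = t * (K * ‖u - p‖ ^ 2) := by
          rw [AffineMap.lineMap_apply_module', add_sub_cancel_right, norm_smul,
            Real.norm_of_nonneg ht.1]
          ring
  have h_le := image_le_of_deriv_right_le_deriv_boundary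
    (fun t ht ↦ (h_line ht).continuousAt.continuousWithinAt)
    (fun t ht ↦ (h_line (Set.Ico_subset_Icc_self ht)).hasDerivWithinAt)
    (by simp) (fun t _ ↦ (h_bound t).continuousAt.continuousWithinAt)
    (fun t _ ↦ (h_bound t).hasDerivWithinAt)
    (fun t ht ↦ h_deriv_le (Set.Ico_subset_Icc_self ht)) (Set.right_mem_Icc.2 zero_le_one)
  simpa using h_le

lemma add_sq_norm_gradient_step_le {K : ℝ≥0} {s : ℝ} (hs : 0 < s) (hsK : s * K ≤ 1)
    (hΦ_convex : ConvexOn ℝ Set.univ Φ) (hΦ : ∀ w, HasGradientAt Φ (Φ' w) w)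
    (hΦ' : LipschitzWith K Φ') (y p u : H) :
    Φ p + 1 / (2 * s) * ‖u - (y - s • Φ' y)‖ ^ 2 ≤
      Φ u + 1 / (2 * s) * ‖u - y‖ ^ 2 + 1 / (2 * s) * ‖p - (y - s • Φ' y)‖ ^ 2 := by
  have h_expand (w : H) : 1 / (2 * s) * ‖w - (y - s • Φ' y)‖ ^ 2 =
      1 / (2 * s) * ‖w - y‖ ^ 2 + ⟪Φ' y, w - y⟫ + s / 2 * ‖Φ' y‖ ^ 2 := by
    rw [← sub_add, norm_add_sq_real, real_inner_smul_right, norm_smul, mul_pow,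
      Real.norm_of_nonneg hs.le, real_inner_comm]
    field
  have h_tangent : Φ y + ⟪Φ' y, u - y⟫ ≤ Φ u :=
    add_inner_gradient_le_of_convexOn hΦ_convex (Set.mem_univ y) (Set.mem_univ u) (hΦ y)
  have h_descent : Φ p ≤ Φ y + ⟪Φ' y, p - y⟫ + K / 2 * ‖p - y‖ ^ 2 :=
    le_add_inner_gradient_add_sq_of_lipschitzOnWith convex_univ (fun w _ ↦ hΦ w)
      hΦ'.lipschitzOnWith (Set.mem_univ y) (Set.mem_univ p)
  have h_step : K / 2 * ‖p - y‖ ^ 2 ≤ 1 / (2 * s) * ‖p - y‖ ^ 2 := by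
    refine mul_le_mul_of_nonneg_right ?_ (sq_nonneg _)
    rw [div_le_div_iff₀ two_pos (by positivity)]
    linarith
  rw [h_expand u, h_expand p]
  linarith

end Gradient

/-- Convexity of an extended-real-valued function. Mathlib's `ConvexOn` does not apply because
`EReal` is not an `ℝ`-module. -/
def EConvex {E : Type*} [AddCommGroup E] [Module ℝ E] (Ψ : E → EReal) : Prop :=
  ∀ u v : E, ∀ a b : ℝ, 0 ≤ a → 0 ≤ b → a + b = 1 →
    Ψ (a • u + b • v) ≤ (a : EReal) * Ψ u + (b : EReal) * Ψ v

/-- `p` is a value of the proximal operator `prox_{sΨ}` at `v`. As a relation, the notion needs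
neither existence nor uniqueness of the minimizer. -/
def IsProxPoint {E : Type*} [NormedAddCommGroup E] (Ψ : E → EReal) (s : ℝ) (v p : E) : Prop :=
  ∀ u, Ψ p + ((1 / (2 * s) * ‖p - v‖ ^ 2 : ℝ) : EReal) ≤
    Ψ u + ((1 / (2 * s) * ‖u - v‖ ^ 2 : ℝ) : EReal)

namespace IsProxPoint

lemma ne_top {E : Type*} [NormedAddCommGroup E] {Ψ : E → EReal} {s : ℝ} {v p u : E}
    (hp : IsProxPoint Ψ s v p) (hu : Ψ u ≠ ⊤) : Ψ p ≠ ⊤ := by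
  intro h_top
  have h_le := hp u
  rw [h_top, EReal.top_add_coe, top_le_iff] at h_le
  exact EReal.add_ne_top hu (EReal.coe_ne_top _) h_le

variable {H : Type*} [NormedAddCommGroup H] [InnerProductSpace ℝ H] {Ψ : H → EReal} {s : ℝ}
  {v p : H}

lemma add_sq_norm_le_of_eq_coe (hp : IsProxPoint Ψ s v p) (hΨ : EConvex Ψ) {u : H} {P U : ℝ}
    (hP : Ψ p = P) (hU : Ψ u = U) :
    P + 1 / (2 * s) * (‖p - v‖ ^ 2 + ‖u - p‖ ^ 2) ≤ U + 1 / (2 * s) * ‖u - v‖ ^ 2 := by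
  have h_sq (t : ℝ) : ‖(1 - t) • p + t • u - v‖ ^ 2 =
      ‖p - v‖ ^ 2 + t * (‖u - v‖ ^ 2 - ‖p - v‖ ^ 2 - (1 - t) * ‖u - p‖ ^ 2) := by
    have h_at_t : (1 - t) • p + t • u - v = (p - v) + t • (u - p) := by module
    have h_at_one : u - v = (p - v) + (u - p) := by module
    rw [h_at_t, h_at_one, norm_add_sq_real, norm_add_sq_real, real_inner_smul_right, norm_smul,
      mul_pow, Real.norm_eq_abs, sq_abs]
    ring
  have h_segment : ∀ t ∈ Set.Ioo (0 : ℝ) 1,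
      P + 1 / (2 * s) * (‖p - v‖ ^ 2 + (1 - t) * ‖u - p‖ ^ 2) ≤
        U + 1 / (2 * s) * ‖u - v‖ ^ 2 := by
    rintro t ⟨ht_pos, ht_lt_one⟩
    have h_min := (hp ((1 - t) • p + t • u)).trans <| add_le_add_left
      (hΨ p u (1 - t) t (sub_nonneg.2 ht_lt_one.le) ht_pos.le (sub_add_cancel 1 t)) _
    rw [hP, hU, h_sq] at h_min
    norm_cast at h_min
    refine le_of_mul_le_mul_left ?_ ht_pos
    linarith
  have h_lim : Tendsto
      (fun t : ℝ ↦ P + 1 / (2 * s) * (‖p - v‖ ^ 2 + (1 - t) * ‖u - p‖ ^ 2)) (𝓝[>] 0)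
      (𝓝 (P + 1 / (2 * s) * (‖p - v‖ ^ 2 + (1 - 0) * ‖u - p‖ ^ 2))) :=
    (Continuous.tendsto (by fun_prop) 0).mono_left nhdsWithin_le_nhds
  simpa using le_of_tendsto h_lim (eventually_of_mem (Ioo_mem_nhdsGT one_pos) h_segment)

lemma add_sq_norm_le (hp : IsProxPoint Ψ s v p) (hΨ : EConvex Ψ) (u : H) :
    Ψ p + ((1 / (2 * s) * (‖p - v‖ ^ 2 + ‖u - p‖ ^ 2) : ℝ) : EReal) ≤
      Ψ u + ((1 / (2 * s) * ‖u - v‖ ^ 2 : ℝ) : EReal) := by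
  by_cases hU_top : Ψ u = ⊤
  · rw [hU_top, EReal.top_add_coe]
    exact le_top
  by_cases hP_bot : Ψ p = ⊥
  · rw [hP_bot, EReal.bot_add]
    exact bot_le
  have hU_bot : Ψ u ≠ ⊥ := by
    intro h_bot
    have h_le := hp u
    rw [h_bot, EReal.bot_add, le_bot_iff, EReal.add_eq_bot_iff] at h_le
    exact h_le.elim hP_bot (EReal.coe_ne_bot _)
  have hP := EReal.coe_toReal (hp.ne_top hU_top) hP_bot
  have hU := EReal.coe_toReal hU_top hU_bot
  rw [← hP, ← hU]
  exact_mod_cast hp.add_sq_norm_le_of_eq_coe hΨ hP.symm hU.symm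

end IsProxPoint

lemma forward_backward_inequality {H : Type*} [NormedAddCommGroup H] [InnerProductSpace ℝ H]
    [CompleteSpace H] {Ψ : H → EReal} {Φ : H → ℝ} {Φ' : H → H} {K : ℝ≥0} {s : ℝ} {y p : H}
    (hΨ : EConvex Ψ) (hΦ_convex : ConvexOn ℝ Set.univ Φ) (hΦ : ∀ w, HasGradientAt Φ (Φ' w) w)
    (hΦ' : LipschitzWith K Φ') (hs : 0 < s) (hsK : s * K ≤ 1)
    (hp : IsProxPoint Ψ s (y - s • Φ' y) p) (u : H) :
    Ψ p + Φ p + ((1 / (2 * s) * ‖u - p‖ ^ 2 : ℝ) : EReal) ≤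
      Ψ u + Φ u + ((1 / (2 * s) * ‖u - y‖ ^ 2 : ℝ) : EReal) := by
  have h_smooth := add_sq_norm_gradient_step_le hs hsK hΦ_convex hΦ hΦ' y p u
  rw [add_assoc, add_assoc, ← EReal.coe_add, ← EReal.coe_add]
  refine add_coe_le_add_coe_of_sub_le (hp.add_sq_norm_le hΨ u) ?_
  linarith

lemma mul_toNNReal_le_one_of_lt_one_div {s L : ℝ} (hs : 0 < s) (hsL : s < 1 / L) :
    s * Real.toNNReal L ≤ 1 := by
  have hL : 0 < L := one_div_pos.1 (hs.trans hsL)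
  rw [Real.coe_toNNReal L hL.le]
  exact ((lt_div_iff₀ hL).1 hsL).le

lemma sq_mul_sq_norm_inertia_smul_le {E : Type*} [SeminormedAddCommGroup E] [NormedSpace ℝ E]
    {α t : ℝ} (hα : 1 ≤ α) (ht : 1 ≤ t) (w : E) :
    t ^ 2 * ‖((t - 1) / (t + α - 1)) • w‖ ^ 2 ≤ (t - 1) ^ 2 * ‖w‖ ^ 2 := by
  have h_coeff : t * ((t - 1) / (t + α - 1)) ≤ t - 1 := by
    rw [mul_div_left_comm]
    exact mul_le_of_le_one_right (by linarith) (div_le_one_of_le₀ (by linarith) (by linarith))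
  have h_nonneg : 0 ≤ (t - 1) / (t + α - 1) := div_nonneg (by linarith) (by linarith)
  rw [norm_smul, Real.norm_of_nonneg h_nonneg, ← mul_pow, ← mul_pow, ← mul_assoc]
  gcongr

lemma telescoping_of_add_le_add {θ : EReal} {θ' d e E t : ℝ} (ht : 0 < t) (hθ' : 0 ≤ θ')
    (h : (θ' : EReal) + d ≤ θ + e) (he : t ^ 2 * e ≤ E) :
    (((t ^ 2 * d : ℝ) : EReal) + (((t + 1) ^ 2 : ℝ) : EReal) * θ') -
      ((E : EReal) + ((t ^ 2 : ℝ) : EReal) * θ) ≤ ((2 * (t + 1) : ℝ) : EReal) * θ' := by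
  induction θ with
  | bot => exact absurd (le_bot_iff.1 h) (EReal.coe_ne_bot (θ' + d))
  | top =>
    rw [EReal.coe_mul_top_of_pos (by positivity), EReal.coe_add_top, EReal.sub_top]
    exact bot_le
  | coe r =>
    norm_cast at h ⊢
    have h_scaled : t ^ 2 * (θ' + d) ≤ t ^ 2 * (r + e) := by gcongr
    linarith

/-- The accelerated forward-backward algorithm with inertial parameter `α` and step size `s`;
`Φ'` stands for the gradient of the smooth term. -/
structure IsAcceleratedForwardBackward {H : Type*} [NormedAddCommGroup H] [Module ℝ H]
    (Ψ : H → EReal) (Φ' : H → H) (s α : ℝ) (x y : ℕ → H) : Prop where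
  extrapolation : ∀ k : ℕ, 1 ≤ k →
    y k = x k + (((k : ℝ) - 1) / ((k : ℝ) + α - 1)) • (x k - x (k - 1))
  prox_step : ∀ k : ℕ, 1 ≤ k → IsProxPoint Ψ s (y k - s • Φ' (y k)) (x (k + 1))

theorem fista_telescoping_inequality_general
    {H : Type*} [NormedAddCommGroup H] [InnerProductSpace ℝ H] [CompleteSpace H]
    {Ψ : H → EReal} {Φ : H → ℝ} {Φ' : H → H} {L : ℝ≥0} {s α m : ℝ} {x y : ℕ → H}
    (hΨ_proper : ∃ u, Ψ u ≠ ⊤) (hΨ_convex : EConvex Ψ) (hΦ_convex : ConvexOn ℝ Set.univ Φ)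
    (hΦ_diff : ∀ u, HasGradientAt Φ (Φ' u) u) (hΦ_lip : LipschitzWith L Φ')
    (hα : 1 ≤ α) (hs : 0 < s) (hsL : s * L ≤ 1)
    (hxy : IsAcceleratedForwardBackward Ψ Φ' s α x y)
    (hm : ∀ u, (m : EReal) ≤ Ψ u + (Φ u : EReal)) {k : ℕ} (hk : 1 ≤ k) :
    (((k : ℝ) ^ 2 * (1 / (2 * s) * ‖x (k + 1) - x k‖ ^ 2) : ℝ) +
          (((k : ℝ) + 1) ^ 2 : ℝ) * ((Ψ (x (k + 1)) + Φ (x (k + 1))) - m)) -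
        ((((k : ℝ) - 1) ^ 2 * (1 / (2 * s) * ‖x k - x (k - 1)‖ ^ 2) : ℝ) +
          ((k : ℝ) ^ 2 : ℝ) * ((Ψ (x k) + Φ (x k)) - m)) ≤
      ((2 * ((k : ℝ) + 1) : ℝ) : EReal) * ((Ψ (x (k + 1)) + Φ (x (k + 1))) - m) := by
  have hk_one : (1 : ℝ) ≤ k := by exact_mod_cast hk
  obtain ⟨u, hu⟩ := hΨ_proper
  obtain ⟨r, hr⟩ := exists_coe_eq_of_coe_le (hm (x (k + 1)))
    (EReal.add_ne_top ((hxy.prox_step k hk).ne_top hu) (EReal.coe_ne_top _))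
  have hr_ge : m ≤ r := by exact_mod_cast hr ▸ hm (x (k + 1))
  have h_decrease := forward_backward_inequality hΨ_convex hΦ_convex hΦ_diff hΦ_lip hs hsL
    (hxy.prox_step k hk) (x k)
  have h_inertia : (k : ℝ) ^ 2 * (1 / (2 * s) * ‖x k - y k‖ ^ 2) ≤
      ((k : ℝ) - 1) ^ 2 * (1 / (2 * s) * ‖x k - x (k - 1)‖ ^ 2) := by
    rw [mul_left_comm, mul_left_comm (((k : ℝ) - 1) ^ 2), hxy.extrapolation k hk,
      sub_add_cancel_left, norm_neg]
    exact mul_le_mul_of_nonneg_left (sq_mul_sq_norm_inertia_smul_le hα hk_one _) (by positivity)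
  rw [hr, norm_sub_rev] at h_decrease
  rw [hr, ← EReal.coe_sub]
  refine telescoping_of_add_le_add (by linarith) (sub_nonneg.2 hr_ge) ?_ h_inertia
  rw [EReal.coe_sub]
  exact sub_add_le_sub_add_of_add_le_add h_decrease m

/-- Inequality (13): `[k²d_k + (k+1)²θ_{k+1}] - [(k-1)²d_{k-1} + k²θ_k] ≤ 2(k+1)θ_{k+1}`. -/
theorem fista_telescoping_inequality
    {H : Type*} [NormedAddCommGroup H] [InnerProductSpace ℝ H] [CompleteSpace H]
    (Ψ : H → EReal) (Φ : H → ℝ) (Φ' : H → H) (L s α : ℝ)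
    (hΨ_ne_bot : ∀ u, Ψ u ≠ ⊥) (hΨ_proper : ∃ u, Ψ u ≠ ⊤)
    (hΨ_lsc : LowerSemicontinuous Ψ)
    (hΨ_convex : ∀ u v : H, ∀ a b : ℝ, 0 ≤ a → 0 ≤ b → a + b = 1 →
      Ψ (a • u + b • v) ≤ (a : EReal) * Ψ u + (b : EReal) * Ψ v)
    (hΦ_convex : ConvexOn ℝ Set.univ Φ)
    (hΦ_diff : ∀ u, HasGradientAt Φ (Φ' u) u)
    (hΦ_lip : LipschitzWith (Real.toNNReal L) Φ')
    (hα : 3 ≤ α) (hs : 0 < s) (hsL : s < 1 / L)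
    (x y : ℕ → H)
    (hy : ∀ k : ℕ, 1 ≤ k →
      y k = x k + (((k : ℝ) - 1) / ((k : ℝ) + α - 1)) • (x k - x (k - 1)))
    (hx : ∀ k : ℕ, 1 ≤ k → ∀ u : H,
      Ψ (x (k + 1)) + ((1 / (2 * s) * ‖x (k + 1) - (y k - s • Φ' (y k))‖ ^ 2 : ℝ) : EReal)
        ≤ Ψ u + ((1 / (2 * s) * ‖u - (y k - s • Φ' (y k))‖ ^ 2 : ℝ) : EReal))
    (xstar : H)
    (hxstar : ∀ u, Ψ xstar + (Φ xstar : EReal) ≤ Ψ u + (Φ u : EReal)) :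
    ∀ k : ℕ, 1 ≤ k →
      ((((k : ℝ) ^ 2 * (1 / (2 * s) * ‖x (k + 1) - x k‖ ^ 2) : ℝ) : EReal) + ((((k : ℝ) + 1) ^ 2 : ℝ) : EReal) * ((Ψ (x (k + 1)) + (Φ (x (k + 1)) : EReal)) - (Ψ xstar + (Φ xstar : EReal)))) -
        (((((k : ℝ) - 1) ^ 2 * (1 / (2 * s) * ‖x ((k - 1) + 1) - x (k - 1)‖ ^ 2) : ℝ) : EReal) + (((k : ℝ) ^ 2 : ℝ) : EReal) * ((Ψ (x k) + (Φ (x k) : EReal)) - (Ψ xstar + (Φ xstar : EReal))))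
        ≤ ((2 * ((k : ℝ) + 1) : ℝ) : EReal) * ((Ψ (x (k + 1)) + (Φ (x (k + 1)) : EReal)) - (Ψ xstar + (Φ xstar : EReal))) := by
  intro k hk
  obtain ⟨m, hm⟩ := exists_coe_eq_of_forall_le hΨ_proper (hΨ_ne_bot xstar) hxstar
  rw [hm] at hxstar ⊢
  rw [Nat.sub_add_cancel hk]
  exact fista_telescoping_inequality_general hΨ_proper hΨ_convex hΦ_convex hΦ_diff hΦ_lip
    (by linarith) hs (mul_toNNReal_le_one_of_lt_one_div hs hsL) ⟨hy, hx⟩ hxstar hk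
end

section
/- Let (β_k)_{k≥1} be a sequence of nonnegative real numbers such that the series Σ_{k=1}^∞ β_k/k converges. Then liminf_{k→∞} β_k ln(k) = 0. -/
open Filter RealInnerProductSpace

/-!
The series `∑ 1 / (k log k)` diverges by Cauchy condensation, since its condensed series is a
multiple of the harmonic series. Were `c ≤ β k * log k` for some `c > 0` and all large `k`, then
`c / (k log k) ≤ β k / k` would make it converge by comparison. So the nonnegative sequence
`β k * log k` drops below every positive constant infinitely often.
-/

theorem antitoneOn_inv_mul_log : AntitoneOn (fun x : ℝ => (x * Real.log x)⁻¹) (Set.Ioi 1) := by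
  intro x hx y _ hxy
  have hx₀ : 0 < x := one_pos.trans hx
  have hy₀ : 0 < y := hx₀.trans_le hxy
  have hlog : 0 < Real.log x := Real.log_pos hx
  dsimp only
  gcongr

theorem not_summable_inv_mul_log :
    ¬ Summable (fun k : ℕ => ((k : ℝ) * Real.log k)⁻¹) := by
  have hnonneg : ∀ᶠ k : ℕ in atTop, 0 ≤ ((k : ℝ) * Real.log k)⁻¹ :=
    Eventually.of_forall fun k => by positivity
  have hanti : ∀ᶠ k : ℕ in atTop,
      (((k + 1 : ℕ) : ℝ) * Real.log (k + 1 : ℕ))⁻¹ ≤ ((k : ℝ) * Real.log k)⁻¹ := by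
    filter_upwards [eventually_gt_atTop 1] with k hk
    exact antitoneOn_inv_mul_log (Set.mem_Ioi.2 (Nat.one_lt_cast.2 hk))
      (Set.mem_Ioi.2 (Nat.one_lt_cast.2 (Nat.lt_succ_of_lt hk))) (Nat.cast_le.2 k.le_succ)
  have hcondensed (k : ℕ) : (2 : ℝ) ^ k * (((2 ^ k : ℕ) : ℝ) * Real.log (2 ^ k : ℕ))⁻¹ =
      (Real.log 2)⁻¹ * (k : ℝ)⁻¹ := by
    rw [Nat.cast_pow, Nat.cast_ofNat, Real.log_pow, mul_inv, mul_inv_cancel_left₀ (by positivity),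
      mul_inv_rev]
  rw [← summable_condensed_iff_of_eventually_nonneg hnonneg hanti, funext hcondensed,
    summable_mul_left_iff (inv_ne_zero (Real.log_pos one_lt_two).ne')]
  exact Real.not_summable_natCast_inv

theorem frequently_lt_mul_norm_of_summable_of_not_summable {ι E : Type*} [NormedAddCommGroup E]
    [CompleteSpace E] {a : ι → ℝ} {w : ι → E} (ha : Summable a) (hw : ¬ Summable w)
    {c : ℝ} (hc : 0 < c) : ∃ᶠ i in cofinite, a i < c * ‖w i‖ := by
  intro hle
  refine hw ((ha.mul_left c⁻¹).of_norm_bounded_eventually ?_)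
  filter_upwards [hle] with i hi
  exact (le_inv_mul_iff₀ hc).2 (not_lt.1 hi)

theorem liminf_eq_of_eventually_ge_of_frequently_lt {ι α : Type*}
    [ConditionallyCompleteLinearOrder α] {f : Filter ι} {u : ι → α} {a : α}
    (hge : ∀ᶠ i in f, a ≤ u i) (hlt : ∀ b > a, ∃ᶠ i in f, u i < b) : liminf u f = a := by
  have hgreatest : IsGreatest {b | ∀ᶠ i in f, b ≤ u i} a :=
    ⟨hge, fun b hb => not_lt.1 fun hab => hlt b hab (hb.mono fun _ => not_lt.2)⟩
  rw [liminf_eq, hgreatest.csSup_eq]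

theorem liminf_div_norm_eq_zero_of_summable_of_not_summable {ι E : Type*} [NormedAddCommGroup E]
    [CompleteSpace E] {a : ι → ℝ} {w : ι → E} (ha₀ : ∀ᶠ i in cofinite, 0 ≤ a i)
    (ha : Summable a) (hw : ¬ Summable w) : liminf (fun i => a i / ‖w i‖) cofinite = 0 := by
  refine liminf_eq_of_eventually_ge_of_frequently_lt
    (ha₀.mono fun i hi => div_nonneg hi (norm_nonneg _)) fun c hc => ?_
  refine ((frequently_lt_mul_norm_of_summable_of_not_summable ha hw hc).and_eventually ha₀).mono ?_
  rintro i ⟨hlt, hi⟩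
  exact (div_lt_iff₀ (pos_of_mul_pos_right (hi.trans_lt hlt) hc.le)).2 hlt

/-- If `β_k ≥ 0` and `∑ β_k / k` converges, then `liminf β_k ln k = 0`. -/
theorem liminf_mul_log_eq_zero_of_summable_div
    (β : ℕ → ℝ) (hβ : ∀ k : ℕ, 1 ≤ k → 0 ≤ β k)
    (hsum : Summable fun k : ℕ => β k / (k : ℝ)) :
    Filter.liminf (fun k : ℕ => β k * Real.log k) Filter.atTop = 0 := by
  have hnonneg : ∀ᶠ k : ℕ in cofinite, 0 ≤ β k / k := by
    rw [Nat.cofinite_eq_atTop]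
    filter_upwards [eventually_ge_atTop 1] with k hk
    exact div_nonneg (hβ k hk) k.cast_nonneg
  have hquot : (fun k : ℕ => β k * Real.log k) =ᶠ[atTop]
      fun k => β k / k / ‖((k : ℝ) * Real.log k)⁻¹‖ := by
    filter_upwards [eventually_ge_atTop 1] with k hk
    have hk₀ : (k : ℝ) ≠ 0 := Nat.cast_ne_zero.2 (Nat.one_le_iff_ne_zero.1 hk)
    rw [Real.norm_of_nonneg (by positivity), div_inv_eq_mul, ← mul_assoc, div_mul_cancel₀ _ hk₀]
  rw [liminf_congr hquot, ← Nat.cofinite_eq_atTop]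
  exact liminf_div_norm_eq_zero_of_summable_of_not_summable hnonneg hsum not_summable_inv_mul_log
end
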